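/- Mehler's formula: for all x, y ∈ ℝ and all α ∈ [0,1), Σ_{n≥0} α^n e_n(x) e_n(y) = (π(1−α²))^{−1/2} exp( −((1−α)/(1+α))·(x+y)²/4 − ((1+α)/(1−α))·(x−y)²/4 ), where (e_n) are the L²-normalized Hermite functions. -/

import Mathlib

/-- The `L²`-normalized Hermite functions
`e_n(x) = (-1)^n c_n e^{x²/2} (d/dx)^n (e^{-x²})` with `c_n⁻¹ = (n!)^{1/2} 2^{n/2} π^{1/4}`. -/
noncomputable def hermiteFn (n : ℕ) (x : ℝ) : ℝ :=
  (-1 : ℝ) ^ n * (((n.factorial : ℝ) ^ ((1:ℝ)/2) * (2:ℝ) ^ ((n:ℝ)/2) * Real.pi ^ ((1:ℝ)/4))⁻¹) *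
    Real.exp (x^2/2) * iteratedDeriv n (fun y => Real.exp (-y^2)) x

lemma itd_mul_id {𝕜 : Type*} [NontriviallyNormedField 𝕜] (g : 𝕜 → 𝕜) (x : 𝕜) (n : ℕ)
    (hg : ContDiffAt 𝕜 n g x) :
    iteratedDeriv n (fun z => z * g z) x
      = x * iteratedDeriv n g x + n * iteratedDeriv (n - 1) g x := by
  rw [iteratedDeriv_fun_mul contDiffAt_fun_id hg]
  cases n with
  | zero => simp
  | succ n =>
    rw [Finset.sum_range_succ', Finset.sum_range_succ', Finset.sum_eq_zero]
    · simp [iteratedDeriv_one]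
      ring
    · intro i _
      simp [iteratedDeriv_fun_id]

lemma gauss_rec (x : ℝ) (n : ℕ) :
    iteratedDeriv (n + 1) (fun y : ℝ => Real.exp (-y^2)) x
      = -2 * (x * iteratedDeriv n (fun y : ℝ => Real.exp (-y^2)) x
        + n * iteratedDeriv (n - 1) (fun y : ℝ => Real.exp (-y^2)) x) := by
  have h : deriv (fun y : ℝ => Real.exp (-y^2)) = fun y => -2 * (y * Real.exp (-y^2)) := by
    funext y
    have h1 : HasDerivAt (fun y : ℝ => Real.exp (-y^2)) _ y := ((hasDerivAt_pow 2 y).neg).exp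
    rw [h1.deriv]
    simp
    ring
  rw [iteratedDeriv_succ', h, iteratedDeriv_const_mul_field, itd_mul_id]
  exact ContDiff.contDiffAt (by fun_prop)

/-- the (signed) Hermite polynomials -/
noncomputable def hh (x : ℝ) (n : ℕ) : ℝ :=
  Real.exp (x^2) * iteratedDeriv n (fun y : ℝ => Real.exp (-y^2)) x

lemma hh_zero (x : ℝ) : hh x 0 = 1 := by
  simp [hh, ← Real.exp_add]

lemma hh_one (x : ℝ) : hh x 1 = -2 * x := by
  have := gauss_rec x 0
  have h0 := hh_zero x
  unfold hh at *
  simp only [zero_add] at this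
  rw [this]
  simp at h0 ⊢
  linear_combination (2 * x) * h0

lemma hh_succ (x : ℝ) (n : ℕ) : hh x (n+2) = -2 * (x * hh x (n+1) + (n+1) * hh x n) := by
  have := gauss_rec x (n+1)
  unfold hh at *
  rw [this]
  simp
  ring

/-- The analytic Mehler kernel. -/
noncomputable def mf (x y : ℂ) (z : ℂ) : ℂ :=
  Complex.exp (-(1/2) * Complex.log (1 - z^2) + (2*x*y*z - (x^2+y^2)*z^2) / (1 - z^2))

lemma slit {z : ℂ} (hz : z ∈ Metric.ball (0:ℂ) 1) : 1 - z^2 ∈ Complex.slitPlane := by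
  left
  have h : ‖z‖ < 1 := by simpa using hz
  have h2 : ‖z^2‖ < 1 := by
    rw [norm_pow]; exact pow_lt_one₀ (norm_nonneg _) h (by norm_num)
  have := Complex.re_le_norm (z^2)
  simp only [Complex.sub_re, Complex.one_re]
  linarith

lemma mf_deriv (x y : ℂ) {z : ℂ} (hz : z ∈ Metric.ball (0:ℂ) 1) :
    HasDerivAt (mf x y) (mf x y z *
      (z / (1 - z^2) + (2*x*y - 2*(x^2+y^2)*z + 2*x*y*z^2)/(1-z^2)^2)) z := by
  have hs := slit hz
  have h0 : 1 - z^2 ≠ 0 := Complex.slitPlane_ne_zero hs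
  have h1 : HasDerivAt (fun z : ℂ => 1 - z^2) (-(2*z)) z := by
    simpa using (hasDerivAt_pow 2 z).const_sub 1
  have h2 : HasDerivAt (fun z : ℂ => 2*x*y*z - (x^2+y^2)*z^2) (2*x*y - (x^2+y^2)*(2*z)) z := by
    have := ((hasDerivAt_id z).const_mul (2*x*y)).sub ((hasDerivAt_pow 2 z).const_mul (x^2+y^2))
    refine this.congr_deriv ?_
    simp
  have h3 := (((h1.clog hs).const_mul (-(1/2))).add (h2.div h1 h0)).cexp
  refine h3.congr_deriv ?_
  simp only [Pi.add_apply, Pi.div_apply]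
  unfold mf
  congr 1
  field_simp
  ring

lemma mf_diff (x y : ℂ) : DifferentiableOn ℂ (mf x y) (Metric.ball 0 1) :=
  fun _ hz => (mf_deriv x y hz).differentiableAt.differentiableWithinAt

lemma mf_rec (x y : ℂ) (n : ℕ) :
    iteratedDeriv (n+1) (mf x y) 0 =
      2 * (n * ((n - 1 : ℕ) * iteratedDeriv (n-1-1+1) (mf x y) 0))
      - n * ((n - 1 : ℕ) * ((n-1-1 : ℕ) * ((n-1-1-1 : ℕ) *
          iteratedDeriv (n-1-1-1-1+1) (mf x y) 0)))
      + (1 - 2*(x^2+y^2)) * (n * iteratedDeriv (n-1) (mf x y) 0)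
      - n * ((n - 1 : ℕ) * ((n-1-1 : ℕ) * iteratedDeriv (n-1-1-1) (mf x y) 0))
      + 2*x*y * iteratedDeriv n (mf x y) 0
      + 2*x*y * (n * ((n - 1 : ℕ) * iteratedDeriv (n-1-1) (mf x y) 0)) := by
  have hball : Metric.ball (0:ℂ) 1 ∈ nhds (0:ℂ) := Metric.ball_mem_nhds _ one_pos
  have ha : AnalyticAt ℂ (mf x y) 0 := (mf_diff x y).analyticAt hball
  have hf : ∀ m : ℕ, ContDiffAt ℂ m (mf x y) 0 := fun m => ha.contDiffAt
  have hf' : ∀ m : ℕ, ContDiffAt ℂ m (deriv (mf x y)) 0 := fun m => ha.deriv.contDiffAt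
  have key : deriv (mf x y) =ᶠ[nhds 0] fun z =>
      2 * (z * (z * deriv (mf x y) z)) - z * (z * (z * (z * deriv (mf x y) z)))
      + (1 - 2*(x^2+y^2)) * (z * mf x y z) - z * (z * (z * mf x y z))
      + 2*x*y * mf x y z + 2*x*y * (z * (z * mf x y z)) := by
    filter_upwards [hball] with z hz
    have h0 : 1 - z^2 ≠ 0 := Complex.slitPlane_ne_zero (slit hz)
    rw [(mf_deriv x y hz).deriv]
    field_simp
    ring
  have hi : ∀ (g : ℂ → ℂ), (∀ m : ℕ, ContDiffAt ℂ m g 0) →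
      ∀ m : ℕ, ContDiffAt ℂ m (fun z => z * g z) 0 :=
    fun g hg m => contDiffAt_fun_id.mul (hg m)
  have hc : ∀ (c : ℂ) (g : ℂ → ℂ), (∀ m : ℕ, ContDiffAt ℂ m g 0) →
      ∀ m : ℕ, ContDiffAt ℂ m (fun z => c * g z) 0 :=
    fun c g hg m => contDiffAt_const.mul (hg m)
  have hl : ∀ (g : ℂ → ℂ), (∀ m : ℕ, ContDiffAt ℂ m g 0) → ∀ m : ℕ,
      iteratedDeriv m (fun z => z * g z) 0 = m * iteratedDeriv (m-1) g 0 := by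
    intro g hg m
    rw [itd_mul_id g 0 m (hg m)]; simp
  have f1 := hi _ hf
  have f2 := hi _ f1
  have f3 := hi _ f2
  have d1 := hi _ hf'
  have d2 := hi _ d1
  have d3 := hi _ d2
  have d4 := hi _ d3
  have t1 := hc 2 _ d2
  have t2 := hc (1 - 2*(x^2+y^2)) _ f1
  have t3 := hc (2*x*y) _ hf
  have t4 := hc (2*x*y) _ f2
  have s1 := fun m => (t1 m).sub (d4 m)
  have s2 := fun m => (s1 m).add (t2 m)
  have s3 := fun m => (s2 m).sub (f3 m)
  have s4 := fun m => (s3 m).add (t3 m)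
  have e := key.iteratedDeriv_eq n
  rw [iteratedDeriv_fun_add (s4 n) (t4 n), iteratedDeriv_fun_add (s3 n) (t3 n),
    iteratedDeriv_fun_sub (s2 n) (f3 n), iteratedDeriv_fun_add (s1 n) (t2 n),
    iteratedDeriv_fun_sub (t1 n) (d4 n)] at e
  simp only [iteratedDeriv_const_mul_field] at e
  rw [hl _ d1, hl _ hf', hl _ d3, hl _ d2, hl _ d1, hl _ hf', hl _ hf, hl _ f2, hl _ f1, hl _ hf,
    hl _ f1, hl _ hf] at e
  simp only [← iteratedDeriv_succ'] at e
  exact e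

lemma mf_coeff (x y : ℝ) (n : ℕ) :
    iteratedDeriv n (mf x y) 0 = ((hh x n * hh y n / 2^n : ℝ) : ℂ) := by
  have b0 : iteratedDeriv 0 (mf x y) 0 = ((hh x 0 * hh y 0 / 2^0 : ℝ) : ℂ) := by
    simp [hh_zero, mf]
  have b1 : iteratedDeriv 1 (mf x y) 0 = ((hh x 1 * hh y 1 / 2^1 : ℝ) : ℂ) := by
    have := mf_rec x y 0
    simp only [zero_add] at this
    rw [this, b0]
    simp [hh_zero, hh_one]
    ring
  have b2 : iteratedDeriv 2 (mf x y) 0 = ((hh x 2 * hh y 2 / 2^2 : ℝ) : ℂ) := by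
    have := mf_rec x y 1
    norm_num only at this
    rw [this, b1, b0]
    simp [hh_zero, hh_one, hh_succ]
    ring
  have b3 : iteratedDeriv 3 (mf x y) 0 = ((hh x 3 * hh y 3 / 2^3 : ℝ) : ℂ) := by
    have := mf_rec x y 2
    norm_num only at this
    rw [this, b2, b1, b0]
    simp [hh_zero, hh_one, hh_succ]
    ring
  have main : ∀ m : ℕ,
      (iteratedDeriv m (mf x y) 0 = ((hh x m * hh y m / 2^m : ℝ) : ℂ)) ∧
      (iteratedDeriv (m+1) (mf x y) 0 = ((hh x (m+1) * hh y (m+1) / 2^(m+1) : ℝ) : ℂ)) ∧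
      (iteratedDeriv (m+2) (mf x y) 0 = ((hh x (m+2) * hh y (m+2) / 2^(m+2) : ℝ) : ℂ)) ∧
      (iteratedDeriv (m+3) (mf x y) 0 = ((hh x (m+3) * hh y (m+3) / 2^(m+3) : ℝ) : ℂ)) := by
    intro m
    induction m with
    | zero => exact ⟨b0, b1, b2, b3⟩
    | succ m ih =>
      obtain ⟨i0, i1, i2, i3⟩ := ih
      refine ⟨i1, i2, i3, ?_⟩
      have := mf_rec x y (m+3)
      have e1 : m + 3 - 1 = m + 2 := rfl
      have e2 : m + 2 - 1 = m + 1 := rfl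
      have e3 : m + 1 - 1 = m := rfl
      have e4 : (m:ℂ) * iteratedDeriv (m - 1 + 1) (mf x y) 0 = m * iteratedDeriv m (mf x y) 0 := by
        cases m <;> simp
      rw [e1, e2, e3, e4, show m + 1 + 1 = m + 2 from rfl, i3, i2, i1, i0] at this
      rw [show m + 1 + 3 = m + 3 + 1 from rfl, this]
      norm_cast
      rw [show m + 3 + 1 = (m + 2) + 2 from rfl, hh_succ x (m+2), hh_succ y (m+2),
        show m + 2 + 1 = (m + 1) + 2 from rfl, hh_succ x (m+1), hh_succ y (m+1),
        show m + 1 + 1 = m + 2 from rfl, hh_succ x m, hh_succ y m]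
      push_cast
      field_simp
      ring
  exact (main n).1

lemma mf_real (x y α : ℝ) (hα0 : 0 ≤ α) (hα1 : α < 1) :
    mf x y α = (((1-α^2) ^ (-(1/2:ℝ)) *
      Real.exp ((2*x*y*α - (x^2+y^2)*α^2)/(1-α^2)) : ℝ) : ℂ) := by
  have h : 0 < 1 - α^2 := by nlinarith
  unfold mf
  rw [Real.rpow_def_of_pos h, ← Real.exp_add, Complex.ofReal_exp]
  congr 1
  push_cast
  rw [Complex.ofReal_log h.le]
  push_cast
  ring

lemma coef (x y α : ℝ) (n : ℕ) : α ^ n * hermiteFn n x * hermiteFn n y =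
    (Real.exp (-(x^2+y^2)/2) * Real.pi ^ (-(1/2:ℝ))) *
      ((n.factorial : ℝ)⁻¹ * α^n * (hh x n * hh y n / 2^n)) := by
  have h1 : ((n.factorial : ℝ) ^ ((1:ℝ)/2))^2 = n.factorial := by
    rw [← Real.rpow_natCast, ← Real.rpow_mul (by positivity)]; norm_num
  have h2 : ((2:ℝ) ^ ((n:ℝ)/2))^2 = 2^n := by
    rw [← Real.rpow_natCast, ← Real.rpow_mul (by positivity), ← Real.rpow_natCast]; norm_num
  have h3 : (Real.pi ^ ((1:ℝ)/4))^2 = (Real.pi ^ (-(1/2:ℝ)))⁻¹ := by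
    rw [← Real.rpow_natCast, ← Real.rpow_mul Real.pi_pos.le, ← Real.rpow_neg Real.pi_pos.le]
    norm_num
  have h4 : ((-1:ℝ)^n)^2 = 1 := by rw [← pow_mul, mul_comm, pow_mul]; simp
  have h5 : Real.exp (x^2/2) * Real.exp (y^2/2) =
      Real.exp (-(x^2+y^2)/2) * (Real.exp (x^2) * Real.exp (y^2)) := by
    rw [← Real.exp_add, ← Real.exp_add, ← Real.exp_add]; congr 1; ring
  unfold hermiteFn hh
  set Dx := iteratedDeriv n (fun y : ℝ => Real.exp (-y^2)) x
  set Dy := iteratedDeriv n (fun y : ℝ => Real.exp (-y^2)) y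
  set A := (n.factorial : ℝ) ^ ((1:ℝ)/2)
  set B := (2:ℝ) ^ ((n:ℝ)/2)
  set C := Real.pi ^ ((1:ℝ)/4)
  calc _ = α^n * ((-1:ℝ)^n)^2 * ((A^2)⁻¹ * (B^2)⁻¹ * (C^2)⁻¹) *
        (Real.exp (x^2/2) * Real.exp (y^2/2)) * (Dx * Dy) := by
          rw [mul_inv, mul_inv, ← inv_pow, ← inv_pow, ← inv_pow]; generalize (-1:ℝ)^n = s; ring
    _ = _ := by
      rw [h1, h2, h3, h4, h5, inv_inv]; ring

/-- Mehler's formula. -/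
theorem stmt9 (x y α : ℝ) (hα0 : 0 ≤ α) (hα1 : α < 1) :
    HasSum (fun n : ℕ => α ^ n * hermiteFn n x * hermiteFn n y)
      ((Real.pi * (1 - α^2)) ^ (-(1/2:ℝ)) *
        Real.exp (-((1-α)/(1+α) * (x+y)^2/4) - (1+α)/(1-α) * (x-y)^2/4)) := by
  have hmem : (α:ℂ) ∈ Metric.ball (0:ℂ) 1 := by
    simpa [abs_of_nonneg hα0] using hα1
  have h := Complex.hasSum_taylorSeries_on_ball (mf_diff x y) hmem
  rw [mf_real x y α hα0 hα1] at h
  have h' : HasSum (fun n : ℕ => (n.factorial : ℝ)⁻¹ * α^n * (hh x n * hh y n / 2^n))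
      ((1-α^2) ^ (-(1/2:ℝ)) * Real.exp ((2*x*y*α - (x^2+y^2)*α^2)/(1-α^2))) := by
    rw [← Complex.hasSum_ofReal]
    refine h.congr_fun fun n => ?_
    rw [mf_coeff]
    simp [mul_assoc]
  have h'' := h'.mul_left (Real.exp (-(x^2+y^2)/2) * Real.pi ^ (-(1/2:ℝ)))
  have hp : 0 < 1 - α^2 := by nlinarith
  have h1 : 1 - α ≠ 0 := by linarith
  have h2 : 1 + α ≠ 0 := by linarith
  have h3 : 1 - α^2 ≠ 0 := hp.ne'
  have hval : (Real.pi * (1 - α^2)) ^ (-(1/2:ℝ)) *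
        Real.exp (-((1-α)/(1+α) * (x+y)^2/4) - (1+α)/(1-α) * (x-y)^2/4) =
      (Real.exp (-(x^2+y^2)/2) * Real.pi ^ (-(1/2:ℝ))) *
        ((1-α^2) ^ (-(1/2:ℝ)) * Real.exp ((2*x*y*α - (x^2+y^2)*α^2)/(1-α^2))) := by
    rw [Real.mul_rpow Real.pi_pos.le hp.le]
    have : Real.exp (-((1-α)/(1+α) * (x+y)^2/4) - (1+α)/(1-α) * (x-y)^2/4) =
        Real.exp (-(x^2+y^2)/2) * Real.exp ((2*x*y*α - (x^2+y^2)*α^2)/(1-α^2)) := by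
      rw [← Real.exp_add]
      congr 1
      have : 1 - α^2 = (1-α)*(1+α) := by ring
      rw [this]
      field_simp
      ring
    rw [this]
    ring
  rw [hval]
  exact h''.congr_fun fun n => coef x y α n
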